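/- Fix a constant ε > 0. There exist constants c > 0, c' > 0 and a threshold n₀ (all depending only on ε) such that the following holds for all integers n ≥ n₀, all m with (1+ε)·n ≤ m, and every integer N > (log n)⁶. Let v₁, …, v_N be vertices chosen independently and uniformly at random (with replacement) from the 2m vertices of the random cuckoo graph with n edges on parts of size m, the choice being independent of the hash functions. Then Pr(∑_{i=1}^{N} C(v_i) > c·N) ≤ n^{−c'·log n}, where the probability is over both the choice of the vertices v_i and the choice of the hash functions. -/

import Mathlib

open Classical

/-- Adjacency: item `x` gives an edge from left vertex `h₀ x` to right vertex `h₁ x`. -/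
def cuckooAdj (n m : ℕ) (h₀ h₁ : Fin n → Fin m) (a b : Fin m ⊕ Fin m) : Prop :=
  ∃ x : Fin n, a = Sum.inl (h₀ x) ∧ b = Sum.inr (h₁ x)

/-- Connectivity in the cuckoo graph: equivalence generated by adjacency. -/
def cuckooConn (n m : ℕ) (h₀ h₁ : Fin n → Fin m) : (Fin m ⊕ Fin m) → (Fin m ⊕ Fin m) → Prop :=
  Relation.EqvGen (cuckooAdj n m h₀ h₁)

/-- `C(v)`: number of edges (items, with multiplicity) in the component of `v`. -/
noncomputable def cuckooC (n m : ℕ) (h₀ h₁ : Fin n → Fin m) (v : Fin m ⊕ Fin m) : ℕ :=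
  Nat.card {x : Fin n // cuckooConn n m h₀ h₁ (Sum.inl (h₀ x)) v}

/-- `V(v)`: number of vertices in the component of `v`. -/
noncomputable def cuckooV (n m : ℕ) (h₀ h₁ : Fin n → Fin m) (v : Fin m ⊕ Fin m) : ℕ :=
  Nat.card {u : Fin m ⊕ Fin m // cuckooConn n m h₀ h₁ u v}

/-- `B_v`: cyclotomic number of the component of `v`, `C(v) − V(v) + 1`. -/
noncomputable def cuckooB (n m : ℕ) (h₀ h₁ : Fin n → Fin m) (v : Fin m ⊕ Fin m) : ℕ :=
  cuckooC n m h₀ h₁ v + 1 - cuckooV n m h₀ h₁ v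

/-- The sample space: a pair of hash functions chosen uniformly at random. -/
abbrev HashPair (n m : ℕ) := (Fin n → Fin m) × (Fin n → Fin m)

/-- Probability of an event under uniformly random hash functions. -/
noncomputable def cuckooPr (n m : ℕ) (E : HashPair n m → Prop) : ℝ :=
  (Nat.card {ω : HashPair n m // E ω} : ℝ) / (Nat.card (HashPair n m) : ℝ)

/-- Expectation of a real random variable under uniformly random hash functions. -/
noncomputable def cuckooE (n m : ℕ) (f : HashPair n m → ℝ) : ℝ :=
  (∑ ω : HashPair n m, f ω) / (Nat.card (HashPair n m) : ℝ)

/-- `X_i`: number of vertices lying in components with exactly `i` edges. -/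
noncomputable def cuckooX (n m : ℕ) (h₀ h₁ : Fin n → Fin m) (i : ℕ) : ℕ :=
  Nat.card {v : Fin m ⊕ Fin m // cuckooC n m h₀ h₁ v = i}

/-- The setoid of connected components. -/
def cuckooSetoid (n m : ℕ) (h₀ h₁ : Fin n → Fin m) : Setoid (Fin m ⊕ Fin m) :=
  ⟨cuckooConn n m h₀ h₁, Relation.EqvGen.is_equivalence _⟩

/-- `ē(G) = ∑_H max(e(H),0)`, the total excess over all components
(`ℕ`-subtraction realizes the `max` with `0`). -/
noncomputable def cuckooEbar (n m : ℕ) (h₀ h₁ : Fin n → Fin m) : ℕ :=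
  ∑ᶠ c : Quotient (cuckooSetoid n m h₀ h₁),
    (Nat.card {x : Fin n // Quotient.mk (cuckooSetoid n m h₀ h₁) (Sum.inl (h₀ x)) = c}
      - Nat.card {u : Fin m ⊕ Fin m // Quotient.mk (cuckooSetoid n m h₀ h₁) u = c})

/-- Probability over both the random hash functions and `N` uniformly random vertices
(chosen with replacement, independently of the hash functions). -/
noncomputable def cuckooPr2 (n m N : ℕ)
    (E : HashPair n m × (Fin N → Fin m ⊕ Fin m) → Prop) : ℝ :=
  (Nat.card {ω : HashPair n m × (Fin N → Fin m ⊕ Fin m) // E ω} : ℝ) /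
    (Nat.card (HashPair n m × (Fin N → Fin m ⊕ Fin m)) : ℝ)

set_option linter.all false

abbrev Om (n m N : ℕ) := HashPair n m × (Fin N → Fin m ⊕ Fin m)

namespace CuckooAux

variable {n m N : ℕ}

/-- endpoint of `e` on the same side as `u` -/
def same (ω : Om n m N) (e : Fin n) : Fin m ⊕ Fin m → Fin m ⊕ Fin m
  | Sum.inl _ => Sum.inl (ω.1.1 e)
  | Sum.inr _ => Sum.inr (ω.1.2 e)

/-- endpoint of `e` on the other side than `u` -/
def far (ω : Om n m N) (e : Fin n) : Fin m ⊕ Fin m → Fin m ⊕ Fin m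
  | Sum.inl _ => Sum.inr (ω.1.2 e)
  | Sum.inr _ => Sum.inl (ω.1.1 e)

/-- `es` is a trail of distinct edges outside `F`, starting in `u` -/
def Trail (ω : Om n m N) : Finset (Fin n) → Fin m ⊕ Fin m → List (Fin n) → Prop
  | _, _, [] => True
  | F, u, e :: es => e ∉ F ∧ same ω e u = u ∧ Trail ω (insert e F) (far ω e u) es

/-- end vertex of a trail -/
def endp (ω : Om n m N) : Fin m ⊕ Fin m → List (Fin n) → Fin m ⊕ Fin m
  | u, [] => u
  | u, e :: es => endp ω (far ω e u) es

def Dep {α : Type*} (I : Finset (Fin N)) (F : Finset (Fin n)) (f : Om n m N → α) : Prop :=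
  ∀ ω ω' : Om n m N, (∀ e ∈ F, ω.1.1 e = ω'.1.1 e ∧ ω.1.2 e = ω'.1.2 e) →
    (∀ i ∈ I, ω.2 i = ω'.2 i) → f ω = f ω'

theorem Dep.mono {α : Type*} {I I' : Finset (Fin N)} {F F' : Finset (Fin n)} {f : Om n m N → α}
    (h : Dep I F f) (hI : I ⊆ I') (hF : F ⊆ F') : Dep I' F' f :=
  fun ω ω' h1 h2 => h ω ω' (fun e he => h1 e (hF he)) (fun i hi => h2 i (hI hi))

def consEmb (n : ℕ) : Fin n × List (Fin n) ↪ List (Fin n) :=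
  ⟨fun p => p.1 :: p.2, by rintro ⟨a, b⟩ ⟨c, d⟩ h; simpa using h⟩

theorem consEmb_apply (p : Fin n × List (Fin n)) : consEmb n p = p.1 :: p.2 := rfl

/-- lists of given length -/
def LL (n : ℕ) : ℕ → Finset (List (Fin n))
  | 0 => {[]}
  | k + 1 => (Finset.univ ×ˢ LL n k).map (consEmb n)

theorem mem_LL (k : ℕ) (es : List (Fin n)) : es ∈ LL n k ↔ es.length = k := by
  induction k generalizing es with
  | zero => simp [LL]
  | succ k ih =>
    cases es with
    | nil => simp [LL, consEmb_apply]
    | cons e es => simp [LL, ih, consEmb_apply]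

theorem sum_LL_succ (k : ℕ) (f : List (Fin n) → ℝ) :
    ∑ es ∈ LL n (k + 1), f es = ∑ e : Fin n, ∑ es ∈ LL n k, f (e :: es) := by
  simp [LL, Finset.sum_product, consEmb_apply]

/-! ### deterministic facts -/

theorem trail_append (ω : Om n m N) (F : Finset (Fin n)) (u : Fin m ⊕ Fin m)
    (es : List (Fin n)) (e : Fin n) (h : Trail ω F u es) (he : e ∉ F) (he' : e ∉ es)
    (hs : same ω e (endp ω u es) = endp ω u es) :
    Trail ω F u (es ++ [e]) ∧ endp ω u (es ++ [e]) = far ω e (endp ω u es) := by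
  induction es generalizing F u with
  | nil => simp_all [Trail, endp]
  | cons a es ih =>
    simp only [List.mem_cons, not_or] at he'
    obtain ⟨h1, h2, h3⟩ := h
    have := ih (insert a F) (far ω a u) h3 (by simp [he, he'.1]) he'.2 hs
    exact ⟨⟨h1, h2, this.1⟩, this.2⟩

/-- initial part up to and including an edge of the trail -/
theorem trail_prefix (ω : Om n m N) (F : Finset (Fin n)) (u : Fin m ⊕ Fin m)
    (es : List (Fin n)) (e : Fin n) (h : Trail ω F u es) (he : e ∈ es) :
    ∃ es', Trail ω F u es' ∧ e ∉ es' ∧ e ∉ F ∧ same ω e (endp ω u es') = endp ω u es' := by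
  induction es generalizing F u with
  | nil => simp at he
  | cons a es ih =>
    obtain ⟨h1, h2, h3⟩ := h
    by_cases hea : e = a
    · subst hea
      exact ⟨[], trivial, by simp, h1, h2⟩
    · have he2 : e ∈ es := by simpa [hea] using he
      obtain ⟨es', a1, a2, a3, a4⟩ := ih _ _ h3 he2
      refine ⟨a :: es', ⟨h1, h2, a1⟩, by simp [hea, a2], fun hh => a3 (by simp [hh]), a4⟩

theorem trail_nodup (ω : Om n m N) (F : Finset (Fin n)) (u : Fin m ⊕ Fin m)
    (es : List (Fin n)) (h : Trail ω F u es) : es.Nodup ∧ ∀ e ∈ es, e ∉ F := by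
  induction es generalizing F u with
  | nil => simp
  | cons a es ih =>
    obtain ⟨h1, h2, h3⟩ := h
    have := ih _ _ h3
    refine ⟨List.nodup_cons.2 ⟨fun hh => this.2 a hh (by simp), this.1⟩, ?_⟩
    intro e he
    rcases List.mem_cons.1 he with rfl | he
    · exact h1
    · exact fun hh => this.2 e he (by simp [hh])

theorem trail_length (ω : Om n m N) (F : Finset (Fin n)) (u : Fin m ⊕ Fin m)
    (es : List (Fin n)) (h : Trail ω F u es) : es.length ≤ n := by
  simpa using (trail_nodup ω F u es h).1.length_le_card

abbrev conn (ω : Om n m N) := cuckooConn n m ω.1.1 ω.1.2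

theorem conn_edge (ω : Om n m N) (e : Fin n) :
    conn ω (Sum.inl (ω.1.1 e)) (Sum.inr (ω.1.2 e)) :=
  Relation.EqvGen.rel _ _ ⟨e, rfl, rfl⟩

section extract
variable (ω : Om n m N) (F : Finset (Fin n)) (W : Fin m ⊕ Fin m → Prop) (w0 : Fin m ⊕ Fin m)

/-- `u` reached from `W` by a fresh trail -/
def Rch (u : Fin m ⊕ Fin m) : Prop := ∃ w es, W w ∧ Trail ω F w es ∧ endp ω w es = u

theorem Rch.last {ω : Om n m N} {F : Finset (Fin n)} {W : Fin m ⊕ Fin m → Prop}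
    {u : Fin m ⊕ Fin m} (h : Rch ω F W u) (e : Fin n) (he : e ∉ F) (hu : same ω e u = u) :
    ∃ w es u', W w ∧ Trail ω F w (es ++ [e]) ∧ same ω e u' = u' ∧
      endp ω w (es ++ [e]) = far ω e u' ∧ endp ω w es = u' := by
  obtain ⟨w, es, hw, ht, rfl⟩ := h
  by_cases hm : e ∈ es
  · obtain ⟨es', a1, a2, a3, a4⟩ := trail_prefix ω F w es e ht hm
    have := trail_append ω F w es' e a1 he a2 a4
    exact ⟨w, es', _, hw, this.1, a4, this.2, rfl⟩
  · have := trail_append ω F w es e ht he hm hu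
    exact ⟨w, es, _, hw, this.1, hu, this.2, rfl⟩

theorem trail_left (ω : Om n m N) (F : Finset (Fin n)) (u : Fin m ⊕ Fin m)
    (es : List (Fin n)) (e : Fin n) (h : Trail ω F u (es ++ [e])) : Trail ω F u es := by
  induction es generalizing F u with
  | nil => trivial
  | cons a es ih => exact ⟨h.1, h.2.1, ih _ _ h.2.2⟩

theorem Rch.both {ω : Om n m N} {F : Finset (Fin n)} {W : Fin m ⊕ Fin m → Prop}
    {u : Fin m ⊕ Fin m} (h : Rch ω F W u) (e : Fin n) (he : e ∉ F) (hu : same ω e u = u) :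
    Rch ω F W (Sum.inl (ω.1.1 e)) ∧ Rch ω F W (Sum.inr (ω.1.2 e)) := by
  obtain ⟨w, es, u', h1, h2, h3, h4, h5⟩ := h.last e he hu
  have A : Rch ω F W u' := ⟨w, es, h1, trail_left ω F w es e h2, h5⟩
  have B : Rch ω F W (far ω e u') := ⟨w, _, h1, h2, h4⟩
  cases u' with
  | inl a => simp only [same] at h3; simp only [far] at B; rw [h3]; exact ⟨A, B⟩
  | inr a => simp only [same] at h3; simp only [far] at B; rw [h3]; exact ⟨B, A⟩

theorem rch_of_conn (hw0 : W w0)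
    (H : ∀ e ∈ F, conn ω (Sum.inl (ω.1.1 e)) w0 → W (Sum.inl (ω.1.1 e)) ∧ W (Sum.inr (ω.1.2 e)))
    (u : Fin m ⊕ Fin m) (hu : conn ω u w0) : Rch ω F W u := by
  have key : ∀ a b, conn ω a b → conn ω a w0 → (Rch ω F W a ↔ Rch ω F W b) := by
    intro a b hab
    induction hab with
    | rel a b h =>
      intro hc
      obtain ⟨e, rfl, rfl⟩ := h
      by_cases he : e ∈ F
      · have := H e he hc
        exact ⟨fun _ => ⟨_, [], this.2, trivial, rfl⟩, fun _ => ⟨_, [], this.1, trivial, rfl⟩⟩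
      · exact ⟨fun h => (h.both e he rfl).2, fun h => (h.both e he rfl).1⟩
    | refl => intro _; rfl
    | symm a b h ih =>
      intro hc
      exact (ih (Relation.EqvGen.trans _ _ _ h hc)).symm
    | trans a b c h1 h2 ih1 ih2 =>
      intro hc
      exact (ih1 hc).trans (ih2 (Relation.EqvGen.trans _ _ _ (Relation.EqvGen.symm _ _ h1) hc))
  exact (key u w0 hu hu).2 ⟨w0, [], hw0, trivial, rfl⟩

end extract

/-- positions of explored vertices -/
abbrev Pos (n N : ℕ) := Fin N ⊕ (Fin n ⊕ Fin n)

def vert (ω : Om n m N) : Pos n N → Fin m ⊕ Fin m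
  | Sum.inl i => ω.2 i
  | Sum.inr (Sum.inl e) => Sum.inl (ω.1.1 e)
  | Sum.inr (Sum.inr e) => Sum.inr (ω.1.2 e)

def PP (I : Finset (Fin N)) (F : Finset (Fin n)) : Finset (Pos n N) :=
  I.disjSum (F.disjSum F)

def sz (I : Finset (Fin N)) (F : Finset (Fin n)) : ℕ := I.card + 2 * F.card

theorem card_PP (I : Finset (Fin N)) (F : Finset (Fin n)) : (PP I F).card = sz I F := by
  simp [PP, sz, two_mul]

noncomputable def ind (p : Prop) : ℝ := if p then 1 else 0

theorem ind_nonneg (p : Prop) : 0 ≤ ind p := by unfold ind; split_ifs <;> norm_num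

theorem ind_and (p q : Prop) : ind (p ∧ q) = ind p * ind q := by
  unfold ind; by_cases hp : p <;> by_cases hq : q <;> simp [hp, hq]

theorem ind_true {p : Prop} (h : p) : ind p = 1 := if_pos h

theorem ind_false {p : Prop} (h : ¬ p) : ind p = 0 := if_neg h

/-- number of trails -/
noncomputable def TT (ω : Om n m N) (F : Finset (Fin n)) (u : Fin m ⊕ Fin m) : ℝ :=
  ∑ l ∈ Finset.range (n + 1), ∑ es ∈ LL n l, ind (Trail ω F u es)

noncomputable def AA (ω : Om n m N) (I : Finset (Fin N)) (F : Finset (Fin n)) : ℝ :=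
  ∑ p ∈ PP I F, TT ω F (vert ω p)

noncomputable def CC (ω : Om n m N) (I : Finset (Fin N)) (F : Finset (Fin n)) (i : Fin N) : ℝ :=
  ∑ p ∈ PP I F, ∑ l ∈ Finset.range (n + 1), ∑ es ∈ LL n l,
    ind (Trail ω F (vert ω p) es) * ind (endp ω (vert ω p) es = ω.2 i) *
      AA ω (insert i I) (F ∪ es.toFinset)

theorem TT_nonneg (ω : Om n m N) (F : Finset (Fin n)) (u : Fin m ⊕ Fin m) : 0 ≤ TT ω F u :=
  Finset.sum_nonneg fun _ _ => Finset.sum_nonneg fun _ _ => ind_nonneg _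

theorem AA_nonneg (ω : Om n m N) (I : Finset (Fin N)) (F : Finset (Fin n)) : 0 ≤ AA ω I F :=
  Finset.sum_nonneg fun _ _ => TT_nonneg _ _ _

theorem CC_nonneg (ω : Om n m N) (I : Finset (Fin N)) (F : Finset (Fin n)) (i : Fin N) :
    0 ≤ CC ω I F i :=
  Finset.sum_nonneg fun _ _ => Finset.sum_nonneg fun _ _ => Finset.sum_nonneg fun _ _ =>
    mul_nonneg (mul_nonneg (ind_nonneg _) (ind_nonneg _)) (AA_nonneg _ _ _)

theorem TT_eq (ω : Om n m N) (F : Finset (Fin n)) (u : Fin m ⊕ Fin m) :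
    TT ω F u = ((((Finset.range (n + 1)).biUnion (LL n)).filter (fun es => Trail ω F u es)).card : ℝ) := by
  unfold TT ind
  rw [← Finset.sum_biUnion]
  · simp
  · intro a _ b _ hab
    refine Finset.disjoint_left.2 fun es h1 h2 => hab ?_
    rw [mem_LL] at h1 h2
    omega

/-- general counting of edges by trails; `P` a finite set of positions. -/
theorem card_le_trails (ω : Om n m N) (F : Finset (Fin n)) (P : Finset (Pos n N))
    (w0 : Fin m ⊕ Fin m) (hw0 : ∃ p ∈ P, vert ω p = w0)
    (H : ∀ e ∈ F, conn ω (Sum.inl (ω.1.1 e)) w0 →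
      Sum.inr (Sum.inl e) ∈ P ∧ Sum.inr (Sum.inr e) ∈ P) :
    (cuckooC n m ω.1.1 ω.1.2 w0 : ℝ) ≤ ∑ p ∈ P, TT ω F (vert ω p) := by
  simp_rw [TT_eq]
  rw [← Nat.cast_sum, Nat.cast_le, ← Finset.card_sigma]
  unfold cuckooC
  rw [Nat.card_eq_fintype_card, Fintype.card_subtype]
  set g : (Σ _ : Pos n N, List (Fin n)) → Option (Fin n) := fun q =>
    match q.2.getLast? with
    | some e => some e
    | none => match q.1 with
      | Sum.inr (Sum.inl e) => some e
      | _ => none with hg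
  rw [← Finset.card_map (⟨some, Option.some_injective _⟩ : Fin n ↪ Option (Fin n))]
  apply Finset.card_le_card_of_surjOn g
  intro y hy
  simp only [Finset.coe_map, Function.Embedding.coeFn_mk, Set.mem_image, Finset.mem_coe,
    Finset.mem_filter, Finset.mem_univ, true_and] at hy
  obtain ⟨x, hx, rfl⟩ := hy
  by_cases hxF : x ∈ F
  · refine ⟨⟨Sum.inr (Sum.inl x), []⟩, ?_, by simp [hg]⟩
    simp only [Finset.coe_sigma, Set.mem_sigma_iff, Finset.mem_coe, Finset.mem_filter,
      Finset.mem_biUnion, mem_LL, Finset.mem_range]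
    exact ⟨(H x hxF hx).1, ⟨0, by omega, rfl⟩, trivial⟩
  · have := rch_of_conn ω F (fun w => ∃ p ∈ P, vert ω p = w) w0 hw0
      (fun e he hc => ⟨⟨_, (H e he hc).1, rfl⟩, ⟨_, (H e he hc).2, rfl⟩⟩) _ hx
    obtain ⟨w, es, u', ⟨p, hp, rfl⟩, h2, -⟩ := this.last x hxF rfl
    refine ⟨⟨p, es ++ [x]⟩, ?_, by simp [hg]⟩
    simp only [Finset.coe_sigma, Set.mem_sigma_iff, Finset.mem_coe, Finset.mem_filter,
      Finset.mem_biUnion, mem_LL, Finset.mem_range]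
    exact ⟨hp, ⟨_, Nat.lt_succ_of_le (trail_length _ _ _ _ h2), rfl⟩, h2⟩

theorem C_le_AA (ω : Om n m N) (I : Finset (Fin N)) (F : Finset (Fin n)) (i : Fin N) (hi : i ∈ I) :
    (cuckooC n m ω.1.1 ω.1.2 (ω.2 i) : ℝ) ≤ AA ω I F := by
  refine card_le_trails ω F (PP I F) _ ⟨Sum.inl i, by simp [PP, hi], rfl⟩ ?_
  intro e he _
  simp [PP, he]

theorem C_le_new (ω : Om n m N) (I : Finset (Fin N)) (F : Finset (Fin n)) (i : Fin N) :
    (cuckooC n m ω.1.1 ω.1.2 (ω.2 i) : ℝ) ≤ TT ω F (ω.2 i) + CC ω I F i := by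
  by_cases hc : ∃ p ∈ PP I F, conn ω (vert ω p) (ω.2 i)
  · obtain ⟨p, hp, hpc⟩ := hc
    have := rch_of_conn ω F (fun w => ∃ p ∈ PP I F, vert ω p = w) (vert ω p) ⟨p, hp, rfl⟩
      (fun e he _ => ⟨⟨Sum.inr (Sum.inl e), by simp [PP, he], rfl⟩,
        ⟨Sum.inr (Sum.inr e), by simp [PP, he], rfl⟩⟩) _ (Relation.EqvGen.symm _ _ hpc)
    obtain ⟨w, es, ⟨q, hq, rfl⟩, ht, he⟩ := this
    have h1 := C_le_AA ω (insert i I) (F ∪ es.toFinset) i (by simp)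
    have hnn : ∀ q es, 0 ≤ ind (Trail ω F (vert ω q) es) * ind (endp ω (vert ω q) es = ω.2 i) *
      AA ω (insert i I) (F ∪ es.toFinset) := fun q es =>
        mul_nonneg (mul_nonneg (ind_nonneg _) (ind_nonneg _)) (AA_nonneg _ _ _)
    have h2 : AA ω (insert i I) (F ∪ es.toFinset) ≤ CC ω I F i := by
      unfold CC
      refine le_trans ?_ (Finset.single_le_sum (f := fun p => ∑ l ∈ Finset.range (n + 1),
        ∑ es ∈ LL n l, ind (Trail ω F (vert ω p) es) * ind (endp ω (vert ω p) es = ω.2 i) *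
          AA ω (insert i I) (F ∪ es.toFinset)) (fun p _ => Finset.sum_nonneg fun _ _ =>
            Finset.sum_nonneg fun _ _ => hnn _ _) hq)
      refine le_trans ?_ (Finset.single_le_sum (f := fun l =>
        ∑ es ∈ LL n l, ind (Trail ω F (vert ω q) es) * ind (endp ω (vert ω q) es = ω.2 i) *
          AA ω (insert i I) (F ∪ es.toFinset)) (fun p _ =>
            Finset.sum_nonneg fun _ _ => hnn _ _)
          (Finset.mem_range.2 (Nat.lt_succ_of_le (trail_length _ _ _ _ ht))))
      refine le_trans ?_ (Finset.single_le_sum (f := fun es =>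
        ind (Trail ω F (vert ω q) es) * ind (endp ω (vert ω q) es = ω.2 i) *
          AA ω (insert i I) (F ∪ es.toFinset)) (fun p _ => hnn _ _)
          ((mem_LL _ es).2 rfl))
      simp [ind, ht, he]
    have := TT_nonneg ω F (ω.2 i)
    linarith
  · have h1 := card_le_trails ω F {Sum.inl i} (ω.2 i) ⟨Sum.inl i, by simp, rfl⟩ (by
      intro e he hh
      exact absurd ⟨Sum.inr (Sum.inl e), by simp [PP, he], hh⟩ hc)
    simp only [Finset.sum_singleton, vert] at h1
    have := CC_nonneg ω I F i
    linarith

noncomputable def SS (ω : Om n m N) : ℝ := ∑ i : Fin N, (cuckooC n m ω.1.1 ω.1.2 (ω.2 i) : ℝ)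

theorem SS_nonneg (ω : Om n m N) : 0 ≤ SS ω := Finset.sum_nonneg fun _ _ => Nat.cast_nonneg _

theorem SS_le (ω : Om n m N) (I : Finset (Fin N)) (F : Finset (Fin n)) :
    SS ω ≤ ∑ i ∈ I, AA ω I F + ∑ i ∈ Iᶜ, (TT ω F (ω.2 i) + CC ω I F i) := by
  unfold SS
  rw [← Finset.sum_add_sum_compl I]
  exact add_le_add (Finset.sum_le_sum fun i hi => C_le_AA ω I F i hi)
    (Finset.sum_le_sum fun i _ => C_le_new ω I F i)

/-! ### independence -/

def updE (ω : Om n m N) (e : Fin n) (c : Fin m × Fin m) : Om n m N :=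
  ((Function.update ω.1.1 e c.1, Function.update ω.1.2 e c.2), ω.2)

def updV (ω : Om n m N) (i : Fin N) (c : Fin m ⊕ Fin m) : Om n m N :=
  (ω.1, Function.update ω.2 i c)

theorem sum_updE (e : Fin n) (f : Om n m N → ℝ) :
    ∑ ω, ∑ c : Fin m × Fin m, f (updE ω e c) = (m : ℝ) ^ 2 * ∑ ω, f ω := by
  have : ∑ q : Om n m N × (Fin m × Fin m), f (updE q.1 e q.2) =
      ∑ q : Om n m N × (Fin m × Fin m), f q.1 := by
    let g : Om n m N × (Fin m × Fin m) → Om n m N × (Fin m × Fin m) :=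
      fun q => (updE q.1 e q.2, (q.1.1.1 e, q.1.1.2 e))
    have hg : Function.Involutive g := by
      rintro ⟨⟨⟨a, b⟩, v⟩, c, d⟩
      simp [g, updE]
    exact Fintype.sum_equiv hg.toPerm _ _ (fun q => rfl)
  rw [Fintype.sum_prod_type] at this
  rw [this, Fintype.sum_prod_type, Finset.mul_sum]
  simp [sq]

theorem sum_updV (i : Fin N) (f : Om n m N → ℝ) :
    ∑ ω, ∑ c : Fin m ⊕ Fin m, f (updV ω i c) = (2 * m : ℝ) * ∑ ω, f ω := by
  have : ∑ q : Om n m N × (Fin m ⊕ Fin m), f (updV q.1 i q.2) =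
      ∑ q : Om n m N × (Fin m ⊕ Fin m), f q.1 := by
    let g : Om n m N × (Fin m ⊕ Fin m) → Om n m N × (Fin m ⊕ Fin m) :=
      fun q => (updV q.1 i q.2, q.1.2 i)
    have hg : Function.Involutive g := by
      rintro ⟨⟨⟨a, b⟩, v⟩, c⟩
      simp [g, updV]
    exact Fintype.sum_equiv hg.toPerm _ _ (fun q => rfl)
  rw [Fintype.sum_prod_type] at this
  rw [this, Fintype.sum_prod_type, Finset.mul_sum]
  simp [two_mul]

theorem Dep.updE {α : Type*} {I : Finset (Fin N)} {F : Finset (Fin n)} {f : Om n m N → α}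
    (h : Dep I F f) {e : Fin n} (he : e ∉ F) (ω : Om n m N) (c : Fin m × Fin m) :
    f (updE ω e c) = f ω := by
  apply h
  · intro a ha
    have : a ≠ e := fun hh => he (hh ▸ ha)
    simp [CuckooAux.updE, this]
  · intro i _; rfl

theorem Dep.updV {α : Type*} {I : Finset (Fin N)} {F : Finset (Fin n)} {f : Om n m N → α}
    (h : Dep I F f) {i : Fin N} (hi : i ∉ I) (ω : Om n m N) (c : Fin m ⊕ Fin m) :
    f (updV ω i c) = f ω := by
  apply h
  · intro a ha; exact ⟨rfl, rfl⟩
  · intro a ha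
    have : a ≠ i := fun hh => hi (hh ▸ ha)
    simp [CuckooAux.updV, this]

theorem indepE (hm : 0 < m) {I : Finset (Fin N)} {F : Finset (Fin n)} {φ : Om n m N → ℝ}
    {u : Om n m N → Fin m ⊕ Fin m} (hφ : Dep I F φ) (hu : Dep I F u) {e : Fin n} (he : e ∉ F) :
    ∑ ω, φ ω * ind (same ω e (u ω) = u ω) = (1 / m : ℝ) * ∑ ω, φ ω := by
  have h := sum_updE e (fun ω : Om n m N => φ ω * ind (same ω e (u ω) = u ω))
  have hm' : (m : ℝ) ≠ 0 := by positivity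
  have h2 : ∀ ω : Om n m N, ∑ c : Fin m × Fin m,
      (φ (updE ω e c) * ind (same (updE ω e c) e (u (updE ω e c)) = u (updE ω e c))) =
      m * φ ω := by
    intro ω
    simp_rw [hφ.updE he, hu.updE he]
    rw [← Finset.mul_sum, mul_comm]
    congr 1
    rw [Fintype.sum_prod_type]
    cases u ω with
    | inl a => simp [same, updE, ind]
    | inr a => simp [same, updE, ind]
  simp_rw [h2] at h
  rw [← Finset.mul_sum] at h
  field_simp
  have : (m : ℝ) * ∑ ω, φ ω = m * (m * ∑ ω, φ ω * ind (same ω e (u ω) = u ω)) := by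
    rw [h]; ring
  linarith [mul_left_cancel₀ hm' this]

theorem indepV (hm : 0 < m) {I : Finset (Fin N)} {F : Finset (Fin n)} {φ : Om n m N → ℝ}
    {u : Om n m N → Fin m ⊕ Fin m} (hφ : Dep I F φ) (hu : Dep I F u) {i : Fin N} (hi : i ∉ I) :
    ∑ ω, φ ω * ind (u ω = ω.2 i) = (1 / (2 * m) : ℝ) * ∑ ω, φ ω := by
  have h := sum_updV i (fun ω : Om n m N => φ ω * ind (u ω = ω.2 i))
  have hm' : (m : ℝ) ≠ 0 := by positivity
  have h2 : ∀ ω : Om n m N, ∑ c : Fin m ⊕ Fin m,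
      (φ (updV ω i c) * ind (u (updV ω i c) = (updV ω i c).2 i)) = φ ω := by
    intro ω
    simp_rw [hφ.updV hi, hu.updV hi]
    rw [← Finset.mul_sum]
    simp [updV, ind]
  simp_rw [h2] at h
  rw [h]
  field_simp

/-! ### measurability of trails -/

theorem Dep.mul {I : Finset (Fin N)} {F : Finset (Fin n)} {f g : Om n m N → ℝ}
    (hf : Dep I F f) (hg : Dep I F g) : Dep I F (fun ω => f ω * g ω) :=
  fun ω ω' h1 h2 => by simp only [hf ω ω' h1 h2, hg ω ω' h1 h2]

theorem dep_far {I : Finset (Fin N)} {F : Finset (Fin n)} {u : Om n m N → Fin m ⊕ Fin m}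
    (hu : Dep I F u) (e : Fin n) : Dep I (insert e F) (fun ω => far ω e (u ω)) := by
  intro ω ω' h1 h2
  have := hu.mono subset_rfl (Finset.subset_insert e F) ω ω' h1 h2
  have h3 := h1 e (by simp)
  simp only [this]
  cases u ω' <;> simp [far, h3]

theorem dep_same {I : Finset (Fin N)} {F : Finset (Fin n)} {u : Om n m N → Fin m ⊕ Fin m}
    (hu : Dep I F u) (e : Fin n) : Dep I (insert e F) (fun ω => ind (same ω e (u ω) = u ω)) := by
  intro ω ω' h1 h2
  have := hu.mono subset_rfl (Finset.subset_insert e F) ω ω' h1 h2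
  have h3 := h1 e (by simp)
  simp only [this]
  cases u ω' <;> simp [same, h3]

theorem dep_trail (es : List (Fin n)) {I : Finset (Fin N)} (F G : Finset (Fin n))
    {u : Om n m N → Fin m ⊕ Fin m} (hu : Dep I F u) :
    Dep I (F ∪ es.toFinset) (fun ω => ind (Trail ω G (u ω) es)) ∧
    Dep I (F ∪ es.toFinset) (fun ω => endp ω (u ω) es) := by
  induction es generalizing F G u with
  | nil =>
    refine ⟨fun ω ω' _ _ => by simp [Trail], ?_⟩
    simpa [endp] using hu
  | cons e es ih =>
    have hsub : insert e F ∪ es.toFinset = F ∪ (e :: es).toFinset := by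
      ext; simp
    have h := ih (insert e F) (insert e G) (dep_far hu e)
    rw [hsub] at h
    refine ⟨?_, h.2⟩
    have h2 := (dep_same hu e).mono (subset_refl I)
      (F' := F ∪ (e :: es).toFinset) (by rw [← hsub]; exact Finset.subset_union_left)
    intro ω ω' a b
    have e1 := h.1 ω ω' a b
    have e2 := h2 ω ω' a b
    beta_reduce at e1 e2
    simp only [Trail, ind_and]
    rw [e1, e2]

theorem dep_vert (I : Finset (Fin N)) (F : Finset (Fin n)) (p : Pos n N) (hp : p ∈ PP I F) :
    Dep I F (fun ω : Om n m N => vert ω p) := by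
  intro ω ω' h1 h2
  rcases p with i | e | e
  · exact h2 i (by simpa [PP] using hp)
  · simp [vert, h1 e (by simpa [PP] using hp)]
  · simp [vert, h1 e (by simpa [PP] using hp)]

theorem sum_trail (hm : 0 < m) (l : ℕ) {I : Finset (Fin N)} {F : Finset (Fin n)}
    {φ : Om n m N → ℝ} {u : Om n m N → Fin m ⊕ Fin m} (h0 : ∀ ω, 0 ≤ φ ω)
    (hφ : Dep I F φ) (hu : Dep I F u) :
    ∑ es ∈ LL n l, ∑ ω, φ ω * ind (Trail ω F (u ω) es) ≤ (n / m : ℝ) ^ l * ∑ ω, φ ω := by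
  induction l generalizing F φ u with
  | zero => simp [LL, Trail, ind]
  | succ l ih =>
    have hs : 0 ≤ ∑ ω, φ ω := Finset.sum_nonneg fun ω _ => h0 ω
    rw [sum_LL_succ]
    have key : ∀ e : Fin n, ∑ es ∈ LL n l, ∑ ω, φ ω * ind (Trail ω F (u ω) (e :: es)) ≤
        (n / m : ℝ) ^ l * ((1 / m : ℝ) * ∑ ω, φ ω) := by
      intro e
      by_cases he : e ∈ F
      · have : ∀ ω es, ¬ Trail ω F (u ω) (e :: es) := fun ω es h => h.1 he
        simp only [this, ind, if_false, mul_zero, Finset.sum_const_zero]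
        positivity
      · rw [← indepE hm hφ hu he]
        refine le_trans (le_of_eq ?_) (ih (F := insert e F)
          (φ := fun ω => φ ω * ind (same ω e (u ω) = u ω)) (u := fun ω => far ω e (u ω))
          (fun ω => mul_nonneg (h0 ω) (ind_nonneg _))
          ((hφ.mono subset_rfl (Finset.subset_insert e F)).mul (dep_same hu e)) (dep_far hu e))
        refine Finset.sum_congr rfl fun es _ => Finset.sum_congr rfl fun ω _ => ?_
        rw [mul_assoc]
        congr 1
        simp only [Trail, ind_and]
        rw [ind_true he, one_mul]
    refine (Finset.sum_le_sum fun e _ => key e).trans (le_of_eq ?_)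
    rw [Finset.sum_const, Finset.card_univ, Fintype.card_fin, nsmul_eq_mul, pow_succ]
    ring

theorem trail_bound (hm : 0 < m) {I : Finset (Fin N)} {F : Finset (Fin n)}
    {φ : Om n m N → ℝ} {u : Om n m N → Fin m ⊕ Fin m} (h0 : ∀ ω, 0 ≤ φ ω)
    (hφ : Dep I F φ) (hu : Dep I F u) (g : List (Fin n) → Om n m N → ℝ) (b : ℕ → ℝ)
    (hb : ∀ l, 0 ≤ b l)
    (hg : ∀ es, ∑ ω, φ ω * ind (Trail ω F (u ω) es) * g es ω ≤
      b es.length * ∑ ω, φ ω * ind (Trail ω F (u ω) es)) :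
    ∑ ω, φ ω * (∑ l ∈ Finset.range (n + 1), ∑ es ∈ LL n l, ind (Trail ω F (u ω) es) * g es ω) ≤
      (∑ l ∈ Finset.range (n + 1), b l * (n / m : ℝ) ^ l) * ∑ ω, φ ω := by
  have e1 : ∑ ω, φ ω * (∑ l ∈ Finset.range (n + 1),
      ∑ es ∈ LL n l, ind (Trail ω F (u ω) es) * g es ω) =
      ∑ l ∈ Finset.range (n + 1), ∑ es ∈ LL n l,
        ∑ ω, φ ω * (ind (Trail ω F (u ω) es) * g es ω) := by
    simp_rw [Finset.mul_sum]
    rw [Finset.sum_comm]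
    exact Finset.sum_congr rfl fun l _ => Finset.sum_comm
  rw [e1, Finset.sum_mul]
  refine Finset.sum_le_sum fun l _ => ?_
  calc ∑ es ∈ LL n l, ∑ ω, φ ω * (ind (Trail ω F (u ω) es) * g es ω)
      ≤ ∑ es ∈ LL n l, b l * ∑ ω, φ ω * ind (Trail ω F (u ω) es) := by
        refine Finset.sum_le_sum fun es hes => ?_
        have := hg es
        rw [(mem_LL l es).1 hes] at this
        simpa only [mul_assoc] using this
    _ = b l * ∑ es ∈ LL n l, ∑ ω, φ ω * ind (Trail ω F (u ω) es) := by rw [Finset.mul_sum]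
    _ ≤ b l * ((n / m : ℝ) ^ l * ∑ ω, φ ω) :=
        mul_le_mul_of_nonneg_left (sum_trail hm l h0 hφ hu) (hb l)
    _ = _ := by ring

theorem geom_bd (k : ℕ) (x ρ : ℝ) (hx : 0 ≤ x) (hxr : x ≤ ρ) (hr : ρ < 1) :
    ∑ l ∈ Finset.range k, x ^ l ≤ 1 / (1 - ρ) := by
  have h1 : (1 - ρ) * ∑ l ∈ Finset.range k, x ^ l ≤ 1 := by
    have h := mul_neg_geom_sum x k
    have h2 : 0 ≤ ∑ l ∈ Finset.range k, x ^ l := Finset.sum_nonneg fun _ _ => by positivity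
    have h3 : 0 ≤ x ^ k := by positivity
    nlinarith
  rw [le_div_iff₀ (by linarith)]
  linarith

theorem sz_trail (I : Finset (Fin N)) (F : Finset (Fin n)) (es : List (Fin n)) :
    sz I (F ∪ es.toFinset) ≤ sz I F + 2 * es.length := by
  have h1 := Finset.card_union_le F es.toFinset
  have h2 := List.toFinset_card_le es
  unfold sz
  omega

theorem sz_insert (I : Finset (Fin N)) (F : Finset (Fin n)) (i : Fin N) :
    sz (insert i I) F ≤ sz I F + 1 := by
  have h1 := Finset.card_insert_le i I
  unfold sz
  omega

def Hyp (n m N : ℕ) (j : ℕ) (K z : ℝ) : Prop :=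
  ∀ (I : Finset (Fin N)) (F : Finset (Fin n)) (φ : Om n m N → ℝ), (∀ ω, 0 ≤ φ ω) → Dep I F φ →
    ∑ ω, φ ω * SS ω ^ j ≤ K * z ^ sz I F * ∑ ω, φ ω

section step
variable {j : ℕ} {K z ρ : ℝ}

theorem TT_bound (hm : 0 < m) (H : Hyp n m N j K z) (hK : 0 ≤ K) (hz : 1 ≤ z)
    (hρ : (n / m : ℝ) * z ^ 2 ≤ ρ) (hρ1 : ρ < 1) {I : Finset (Fin N)} {F : Finset (Fin n)}
    {φ : Om n m N → ℝ} {u : Om n m N → Fin m ⊕ Fin m} (h0 : ∀ ω, 0 ≤ φ ω)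
    (hφ : Dep I F φ) (hu : Dep I F u) :
    ∑ ω, φ ω * (TT ω F (u ω) * SS ω ^ j) ≤ K * z ^ sz I F * (1 / (1 - ρ)) * ∑ ω, φ ω := by
  have h := trail_bound hm h0 hφ hu (fun _ ω => SS ω ^ j) (fun l => K * z ^ (sz I F + 2 * l))
    (fun l => by positivity) (by
      intro es
      have hT0 : ∀ ω, 0 ≤ φ ω * ind (Trail ω F (u ω) es) :=
        fun ω => mul_nonneg (h0 ω) (ind_nonneg _)
      refine (H I (F ∪ es.toFinset) (fun ω => φ ω * ind (Trail ω F (u ω) es)) hT0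
        ((hφ.mono subset_rfl Finset.subset_union_left).mul (dep_trail es F F hu).1)).trans ?_
      refine mul_le_mul_of_nonneg_right ?_ (Finset.sum_nonneg fun ω _ => hT0 ω)
      exact mul_le_mul_of_nonneg_left (pow_le_pow_right₀ hz (sz_trail I F es)) hK)
  have hs : 0 ≤ ∑ ω, φ ω := Finset.sum_nonneg fun ω _ => h0 ω
  have e1 : ∀ ω, φ ω * (TT ω F (u ω) * SS ω ^ j) = φ ω * (∑ l ∈ Finset.range (n + 1),
      ∑ es ∈ LL n l, ind (Trail ω F (u ω) es) * SS ω ^ j) := by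
    intro ω
    simp only [TT, Finset.sum_mul]
  simp_rw [e1]
  refine h.trans (mul_le_mul_of_nonneg_right ?_ hs)
  have e2 : ∑ l ∈ Finset.range (n + 1), K * z ^ (sz I F + 2 * l) * (n / m : ℝ) ^ l =
      K * z ^ sz I F * ∑ l ∈ Finset.range (n + 1), ((n / m : ℝ) * z ^ 2) ^ l := by
    rw [Finset.mul_sum]
    refine Finset.sum_congr rfl fun l _ => ?_
    rw [pow_add, pow_mul, mul_pow]
    ring
  rw [e2]
  exact mul_le_mul_of_nonneg_left (geom_bd _ _ _ (by positivity) hρ hρ1) (by positivity)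

theorem AA_bound (hm : 0 < m) (H : Hyp n m N j K z) (hK : 0 ≤ K) (hz : 1 ≤ z)
    (hρ : (n / m : ℝ) * z ^ 2 ≤ ρ) (hρ1 : ρ < 1) {I : Finset (Fin N)} {F : Finset (Fin n)}
    {φ : Om n m N → ℝ} (h0 : ∀ ω, 0 ≤ φ ω) (hφ : Dep I F φ) :
    ∑ ω, φ ω * (AA ω I F * SS ω ^ j) ≤
      sz I F * (K * z ^ sz I F * (1 / (1 - ρ))) * ∑ ω, φ ω := by
  have e1 : ∀ ω, φ ω * (AA ω I F * SS ω ^ j) =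
      ∑ p ∈ PP I F, φ ω * (TT ω F (vert ω p) * SS ω ^ j) := by
    intro ω
    rw [AA, Finset.sum_mul, Finset.mul_sum]
  simp_rw [e1]
  rw [Finset.sum_comm]
  refine (Finset.sum_le_sum fun p hp =>
    TT_bound hm H hK hz hρ hρ1 h0 hφ (dep_vert I F p hp)).trans (le_of_eq ?_)
  rw [Finset.sum_const, card_PP, nsmul_eq_mul]
  ring

theorem TTi_bound (hm : 0 < m) (H : Hyp n m N j K z) (hK : 0 ≤ K) (hz : 1 ≤ z)
    (hρ : (n / m : ℝ) * z ^ 2 ≤ ρ) (hρ1 : ρ < 1) {I : Finset (Fin N)} {F : Finset (Fin n)}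
    {φ : Om n m N → ℝ} (h0 : ∀ ω, 0 ≤ φ ω) (hφ : Dep I F φ) (i : Fin N) :
    ∑ ω, φ ω * (TT ω F (ω.2 i) * SS ω ^ j) ≤
      K * z ^ (sz I F + 1) * (1 / (1 - ρ)) * ∑ ω, φ ω := by
  have hs : 0 ≤ ∑ ω, φ ω := Finset.sum_nonneg fun ω _ => h0 ω
  refine (TT_bound hm H hK hz hρ hρ1 h0 (hφ.mono (Finset.subset_insert i I) subset_rfl)
    (u := fun ω => ω.2 i) (fun ω ω' _ h2 => h2 i (by simp))).trans ?_
  refine mul_le_mul_of_nonneg_right ?_ hs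
  have : 0 < 1 - ρ := by linarith
  refine mul_le_mul_of_nonneg_right ?_ (by positivity)
  exact mul_le_mul_of_nonneg_left (pow_le_pow_right₀ hz (sz_insert I F i)) hK

theorem CC_bound (hm : 0 < m) (H : Hyp n m N j K z) (hK : 0 ≤ K) (hz : 1 ≤ z)
    (hρ : (n / m : ℝ) * z ^ 2 ≤ ρ) (hρ1 : ρ < 1) {I : Finset (Fin N)} {F : Finset (Fin n)}
    {φ : Om n m N → ℝ} (h0 : ∀ ω, 0 ≤ φ ω) (hφ : Dep I F φ) (i : Fin N) (hi : i ∉ I) :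
    ∑ ω, φ ω * (CC ω I F i * SS ω ^ j) ≤
      sz I F * (∑ l ∈ Finset.range (n + 1), ((sz I F + 1 + 2 * l : ℕ) *
        (K * z ^ (sz I F + 1 + 2 * l) * (1 / (1 - ρ))) * (1 / (2 * m))) * (n / m : ℝ) ^ l)
        * ∑ ω, φ ω := by
  have hρ2 : 0 < 1 - ρ := by linarith
  have e1 : ∀ ω, φ ω * (CC ω I F i * SS ω ^ j) =
      ∑ p ∈ PP I F, φ ω * (∑ l ∈ Finset.range (n + 1), ∑ es ∈ LL n l,
        ind (Trail ω F (vert ω p) es) * (ind (endp ω (vert ω p) es = ω.2 i) *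
      (AA ω (insert i I) (F ∪ es.toFinset) * SS ω ^ j))) := by
    intro ω
    rw [CC, Finset.sum_mul, Finset.mul_sum]
    refine Finset.sum_congr rfl fun p _ => ?_
    simp only [Finset.sum_mul, mul_assoc]
  simp_rw [e1]
  rw [Finset.sum_comm]
  have key : ∀ p ∈ PP I F, ∑ ω, φ ω * (∑ l ∈ Finset.range (n + 1), ∑ es ∈ LL n l,
        ind (Trail ω F (vert ω p) es) * (ind (endp ω (vert ω p) es = ω.2 i) *
      (AA ω (insert i I) (F ∪ es.toFinset) * SS ω ^ j))) ≤
      (∑ l ∈ Finset.range (n + 1), ((sz I F + 1 + 2 * l : ℕ) *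
        (K * z ^ (sz I F + 1 + 2 * l) * (1 / (1 - ρ))) * (1 / (2 * m))) * (n / m : ℝ) ^ l)
        * ∑ ω, φ ω := by
    intro p hp
    have hu := dep_vert (m := m) I F p hp
    refine trail_bound hm h0 hφ hu (fun es ω => ind (endp ω (vert ω p) es = ω.2 i) *
      (AA ω (insert i I) (F ∪ es.toFinset) * SS ω ^ j))
      (fun l => ((sz I F + 1 + 2 * l : ℕ) *
        (K * z ^ (sz I F + 1 + 2 * l) * (1 / (1 - ρ))) * (1 / (2 * m))))
      (fun l => by positivity) ?_
    intro es
    have hd := (hφ.mono (subset_refl I) (Finset.subset_union_left (s₂ := es.toFinset))).mul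
      (dep_trail es F F hu).1
    have hde := (dep_trail es F F hu).2
    have hT0 : ∀ ω, 0 ≤ φ ω * ind (Trail ω F (vert ω p) es) :=
      fun ω => mul_nonneg (h0 ω) (ind_nonneg _)
    have hT0' : ∀ ω, 0 ≤ φ ω * ind (Trail ω F (vert ω p) es) * ind (endp ω (vert ω p) es = ω.2 i) :=
      fun ω => mul_nonneg (hT0 ω) (ind_nonneg _)
    have hd2 : Dep (insert i I) (F ∪ es.toFinset)
        (fun ω => φ ω * ind (Trail ω F (vert ω p) es) * ind (endp ω (vert ω p) es = ω.2 i)) := by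
      refine (hd.mono (Finset.subset_insert i I) subset_rfl).mul ?_
      intro ω ω' h1 h2
      have a1 := (hde.mono (Finset.subset_insert i I) subset_rfl) ω ω' h1 h2
      have a2 := h2 i (by simp)
      beta_reduce at a1 ⊢
      rw [a1, a2]
    have hA := AA_bound hm H hK hz hρ hρ1 hT0' hd2
    have hV := indepV hm hd hde hi
    beta_reduce at hV
    rw [hV] at hA
    simp only [← mul_assoc] at hA ⊢
    refine hA.trans ?_
    have hsz : sz (insert i I) (F ∪ es.toFinset) ≤ sz I F + 1 + 2 * es.length := by
      have h1 := sz_insert I (F ∪ es.toFinset) i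
      have h2 := sz_trail I F es
      omega
    refine mul_le_mul_of_nonneg_right ?_ (Finset.sum_nonneg fun ω _ => hT0 ω)
    gcongr
  refine (Finset.sum_le_sum key).trans (le_of_eq ?_)
  rw [Finset.sum_const, card_PP, nsmul_eq_mul]
  ring

end step

theorem step_bound {j : ℕ} {K z ρ y E Z : ℝ} (hm : 0 < m) (H : Hyp n m N j K z) (hK : 0 ≤ K)
    (hz : 1 ≤ z) (hE : 1 ≤ E) (hy : 0 < y) (hyN : y ^ 2 ≤ N) (hym : y ^ 2 ≤ m)
    (hEk : ∀ k : ℕ, (k : ℝ) ≤ y * E ^ k) (hZ : z * E * E ≤ Z)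
    (hρ : (n / m : ℝ) * Z ^ 2 ≤ ρ) (hρ1 : ρ < 1) :
    Hyp n m N (j + 1) (K * (Z * (2 * (1 / (1 - ρ)) + (1 / (1 - ρ)) ^ 2) * N)) (z * E * E) := by
  intro I F φ h0 hφ
  have hχ : 0 < 1 / (1 - ρ) := by
    have : 0 < 1 - ρ := by linarith
    positivity
  have hmR : (0 : ℝ) < m := by exact_mod_cast hm
  have hzE : z ≤ z * E := le_mul_of_one_le_right (by linarith) hE
  have hzEE : z * E ≤ z * E * E := le_mul_of_one_le_right (by positivity) hE
  have hqZ : z * E ≤ Z := hzEE.trans hZ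
  have hzZ : z ≤ Z := hzE.trans hqZ
  have hZ1 : 1 ≤ Z := hz.trans hzZ
  have hρz : (n / m : ℝ) * z ^ 2 ≤ ρ := le_trans (by gcongr) hρ
  have hρq : (n / m : ℝ) * (z * E) ^ 2 ≤ ρ := le_trans (by gcongr) hρ
  have hs : 0 ≤ ∑ ω, φ ω := Finset.sum_nonneg fun ω _ => h0 ω
  set Φ := ∑ ω, φ ω with hΦ
  set s := sz I F with hsdef
  have hN0 : (0 : ℝ) ≤ N := Nat.cast_nonneg _
  -- first term
  have b1 : ∀ i ∈ I, ∑ ω, φ ω * (AA ω I F * SS ω ^ j) ≤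
      s * (K * z ^ s * (1 / (1 - ρ))) * Φ := fun i _ =>
    AA_bound hm H hK hz hρz hρ1 h0 hφ
  have b2 : ∀ i ∈ Iᶜ, ∑ ω, φ ω * (TT ω F (ω.2 i) * SS ω ^ j) ≤
      K * Z * (z * E * E) ^ s * (1 / (1 - ρ)) * Φ := by
    intro i _
    refine (TTi_bound hm H hK hz hρz hρ1 h0 hφ i).trans ?_
    rw [← hΦ, ← hsdef, pow_succ]
    have : z ^ s ≤ (z * E * E) ^ s := by gcongr; linarith
    calc K * (z ^ s * z) * (1 / (1 - ρ)) * Φ ≤ K * ((z * E * E) ^ s * Z) * (1 / (1 - ρ)) * Φ := by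
          gcongr
      _ = _ := by ring
  have b3 : ∀ i ∈ Iᶜ, ∑ ω, φ ω * (CC ω I F i * SS ω ^ j) ≤
      K * Z * (z * E * E) ^ s * (1 / (1 - ρ)) ^ 2 * Φ := by
    intro i hi
    refine (CC_bound hm H hK hz hρz hρ1 h0 hφ i (by simpa using hi)).trans ?_
    rw [← hΦ, ← hsdef]
    refine mul_le_mul_of_nonneg_right ?_ hs
    have c1 : ∑ l ∈ Finset.range (n + 1), ((s + 1 + 2 * l : ℕ) *
        (K * z ^ (s + 1 + 2 * l) * (1 / (1 - ρ))) * (1 / (2 * m))) * (n / m : ℝ) ^ l ≤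
        y * K * (1 / (1 - ρ)) * (1 / (2 * m)) * (z * E) ^ (s + 1) * (1 / (1 - ρ)) := by
      calc _ ≤ ∑ l ∈ Finset.range (n + 1), ((y * E ^ (s + 1 + 2 * l)) *
            (K * z ^ (s + 1 + 2 * l) * (1 / (1 - ρ))) * (1 / (2 * m))) * (n / m : ℝ) ^ l := by
            refine Finset.sum_le_sum fun l _ => ?_
            gcongr
            exact hEk _
        _ = y * K * (1 / (1 - ρ)) * (1 / (2 * m)) * (z * E) ^ (s + 1) *
            ∑ l ∈ Finset.range (n + 1), ((n / m : ℝ) * (z * E) ^ 2) ^ l := by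
            rw [Finset.mul_sum]
            refine Finset.sum_congr rfl fun l _ => ?_
            rw [pow_add E, pow_add z, pow_mul E, pow_mul z, mul_pow (n / m : ℝ), mul_pow z E,
              mul_pow z E, mul_pow (z ^ 2)]
            ring
        _ ≤ _ := by
            refine mul_le_mul_of_nonneg_left (geom_bd _ _ _ (by positivity) hρq hρ1) ?_
            positivity
    calc _ ≤ (y * E ^ s) *
          (y * K * (1 / (1 - ρ)) * (1 / (2 * m)) * (z * E) ^ (s + 1) * (1 / (1 - ρ))) := by
          refine mul_le_mul (hEk s) c1 (Finset.sum_nonneg fun l _ => by positivity) (by positivity)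
      _ = (y ^ 2 * (1 / (2 * m))) * (K * (z * E) * (z * E * E) ^ s * (1 / (1 - ρ)) ^ 2) := by
          rw [mul_pow (z * E) E, pow_succ (z * E)]
          ring
      _ ≤ 1 * (K * Z * (z * E * E) ^ s * (1 / (1 - ρ)) ^ 2) := by
          have : y ^ 2 * (1 / (2 * m)) ≤ 1 := by
            rw [mul_one_div, div_le_one (by positivity)]
            linarith
          gcongr
      _ = _ := by ring
  have b1' : (I.card : ℝ) * (s * (K * z ^ s * (1 / (1 - ρ))) * Φ) ≤
      N * (K * Z * (z * E * E) ^ s * (1 / (1 - ρ)) * Φ) := by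
    have hI : (I.card : ℝ) ≤ s := by
      have : I.card ≤ s := by rw [hsdef]; unfold sz; omega
      exact_mod_cast this
    calc (I.card : ℝ) * (s * (K * z ^ s * (1 / (1 - ρ))) * Φ)
        ≤ (y * E ^ s) * ((y * E ^ s) * (K * z ^ s * (1 / (1 - ρ))) * Φ) := by
          have := hEk s
          gcongr
          linarith
      _ = y ^ 2 * (K * 1 * (z * E * E) ^ s * (1 / (1 - ρ)) * Φ) := by
          rw [mul_pow, mul_pow]; ring
      _ ≤ _ := by gcongr
  have hIc : ((Iᶜ).card : ℝ) ≤ N := by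
    have : (Iᶜ).card ≤ N := by simpa using Finset.card_le_univ (Iᶜ)
    exact_mod_cast this
  calc ∑ ω, φ ω * SS ω ^ (j + 1)
      ≤ ∑ ω, φ ω * ((∑ i ∈ I, AA ω I F + ∑ i ∈ Iᶜ, (TT ω F (ω.2 i) + CC ω I F i)) * SS ω ^ j) := by
        refine Finset.sum_le_sum fun ω _ => mul_le_mul_of_nonneg_left ?_ (h0 ω)
        rw [pow_succ']
        exact mul_le_mul_of_nonneg_right (SS_le ω I F) (pow_nonneg (SS_nonneg ω) _)
    _ = ∑ i ∈ I, ∑ ω, φ ω * (AA ω I F * SS ω ^ j) +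
        ∑ i ∈ Iᶜ, (∑ ω, φ ω * (TT ω F (ω.2 i) * SS ω ^ j) +
          ∑ ω, φ ω * (CC ω I F i * SS ω ^ j)) := by
        rw [Finset.sum_comm (s := I)]
        simp_rw [← Finset.sum_add_distrib]
        rw [Finset.sum_comm (s := Iᶜ), ← Finset.sum_add_distrib]
        refine Finset.sum_congr rfl fun ω _ => ?_
        rw [add_mul, mul_add, Finset.sum_mul, Finset.sum_mul, Finset.mul_sum, Finset.mul_sum]
        congr 1
        exact Finset.sum_congr rfl fun i _ => by ring
    _ ≤ ∑ i ∈ I, s * (K * z ^ s * (1 / (1 - ρ))) * Φ +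
        ∑ i ∈ Iᶜ, (K * Z * (z * E * E) ^ s * (1 / (1 - ρ)) * Φ +
          K * Z * (z * E * E) ^ s * (1 / (1 - ρ)) ^ 2 * Φ) :=
        add_le_add (Finset.sum_le_sum b1)
          (Finset.sum_le_sum fun i hi => add_le_add (b2 i hi) (b3 i hi))
    _ ≤ N * (K * Z * (z * E * E) ^ s * (1 / (1 - ρ)) * Φ) +
        N * (K * Z * (z * E * E) ^ s * (1 / (1 - ρ)) * Φ +
          K * Z * (z * E * E) ^ s * (1 / (1 - ρ)) ^ 2 * Φ) := by
        rw [Finset.sum_const, Finset.sum_const, nsmul_eq_mul, nsmul_eq_mul]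
        refine add_le_add b1' (mul_le_mul_of_nonneg_right hIc (by positivity))
    _ = _ := by ring

theorem main_ind {ρ y Z : ℝ} (hm : 0 < m) (hy : 0 < y) (hyN : y ^ 2 ≤ N) (hym : y ^ 2 ≤ m)
    (hρ : (n / m : ℝ) * Z ^ 2 ≤ ρ) (hρ1 : ρ < 1) (j : ℕ) (hj : Real.exp (2 * j / y) ≤ Z) :
    Hyp n m N j ((Z * (2 * (1 / (1 - ρ)) + (1 / (1 - ρ)) ^ 2) * N) ^ j)
      (Real.exp (2 * j / y)) := by
  induction j with
  | zero =>
    intro I F φ _ _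
    simp
  | succ j ih =>
    have e : Real.exp (2 * ((j + 1 : ℕ) : ℝ) / y) =
        Real.exp (2 * j / y) * Real.exp (1 / y) * Real.exp (1 / y) := by
      rw [← Real.exp_add, ← Real.exp_add]
      congr 1
      push_cast
      ring
    have hE : 1 ≤ Real.exp (1 / y) := Real.one_le_exp (by positivity)
    have hz : 1 ≤ Real.exp (2 * j / y) := Real.one_le_exp (by positivity)
    rw [e] at hj ⊢
    have hχ : 0 < 1 / (1 - ρ) := by
      have : 0 < 1 - ρ := by linarith
      positivity
    have hz0 := Real.exp_pos (2 * j / y)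
    have hj' : Real.exp (2 * j / y) ≤ Z := by
      refine le_trans ?_ hj
      rw [mul_assoc]
      exact le_mul_of_one_le_right hz0.le (one_le_mul_of_one_le_of_one_le hE hE)
    have hZ : 0 ≤ Z := hz0.le.trans hj'
    rw [pow_succ]
    refine step_bound hm (ih hj') (by positivity) hz hE hy hyN hym ?_ hj hρ hρ1
    intro k
    rw [← Real.exp_nat_mul]
    have := Real.add_one_le_exp ((k : ℝ) * (1 / y))
    calc (k : ℝ) = y * (k * (1 / y)) := by field_simp
      _ ≤ _ := by gcongr; linarith

theorem pr_bound {ρ y Z : ℝ} (hm : 0 < m) (hN : 0 < N) (hy : 0 < y) (hyN : y ^ 2 ≤ N)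
    (hym : y ^ 2 ≤ m) (hZ0 : 0 < Z)
    (hρ : (n / m : ℝ) * Z ^ 2 ≤ ρ) (hρ1 : ρ < 1) (j : ℕ) (hj : Real.exp (2 * j / y) ≤ Z) :
    cuckooPr2 n m N (fun ω =>
      Real.exp 1 * (Z * (2 * (1 / (1 - ρ)) + (1 / (1 - ρ)) ^ 2)) * N <
        ∑ i : Fin N, (cuckooC n m ω.1.1 ω.1.2 (ω.2 i) : ℝ)) ≤ Real.exp (-j) := by
  have hχ : 0 < 1 / (1 - ρ) := by
    have : 0 < 1 - ρ := by linarith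
    positivity
  set D := Z * (2 * (1 / (1 - ρ)) + (1 / (1 - ρ)) ^ 2) with hD
  have hD0 : 0 < D := by positivity
  have hNR : (0 : ℝ) < N := by exact_mod_cast hN
  have h := main_ind hm hy hyN hym hρ hρ1 j hj ∅ ∅ (fun _ : Om n m N => (1 : ℝ))
    (fun _ => zero_le_one) (fun _ _ _ _ => rfl)
  rw [← hD] at h
  simp only [one_mul, sz, Finset.card_empty, mul_zero, add_zero, pow_zero, mul_one,
    Finset.sum_const, nsmul_eq_mul, Finset.card_univ] at h
  haveI : Nonempty (Fin m) := ⟨⟨0, hm⟩⟩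
  have hc : (0 : ℝ) < Fintype.card (Om n m N) := by
    exact_mod_cast Fintype.card_pos
  unfold cuckooPr2
  rw [Nat.card_eq_fintype_card, Nat.card_eq_fintype_card, Fintype.card_subtype]
  rw [div_le_iff₀ hc]
  set A := Finset.univ.filter (fun ω : Om n m N => Real.exp 1 * D * N <
        ∑ i : Fin N, (cuckooC n m ω.1.1 ω.1.2 (ω.2 i) : ℝ)) with hA
  have h2 : (A.card : ℝ) * (Real.exp 1 * D * N) ^ j ≤ ∑ ω : Om n m N, SS ω ^ j := by
    rw [← nsmul_eq_mul]
    refine (Finset.card_nsmul_le_sum A (fun ω => SS ω ^ j) _ ?_).trans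
      (Finset.sum_le_sum_of_subset_of_nonneg (Finset.subset_univ _)
        (fun ω _ _ => pow_nonneg (SS_nonneg ω) _))
    intro ω hω
    have := (Finset.mem_filter.1 hω).2
    exact pow_le_pow_left₀ (by positivity) this.le j
  have h3 := h2.trans h
  have e1 : (Real.exp 1 * D * N) ^ j = Real.exp j * (D * N) ^ j := by
    rw [mul_assoc, mul_pow, ← Real.exp_nat_mul, mul_one]
  rw [e1] at h3
  have hp : 0 < (D * N) ^ j := by positivity
  have h4 : (A.card : ℝ) * Real.exp j ≤ Fintype.card (Om n m N) := by
    refine le_of_mul_le_mul_right ?_ hp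
    linarith
  rw [Real.exp_neg, inv_mul_eq_div, le_div_iff₀ (Real.exp_pos _)]
  exact h4

end CuckooAux

/-- Lemma: if `(1+ε)·n ≤ m`, `N > (log n)⁶`, and `v₁, …, v_N` are vertices chosen
independently and uniformly at random (with replacement), then
`Pr(∑_{i=1}^{N} C(v_i) > c·N) ≤ n^{−c'·log n}`, where the probability is over both the
vertices and the hash functions, and `c, c' > 0`, `n₀` depend only on `ε`. -/
theorem cuckoo_random_vertices_sum_bound (ε : ℝ) (hε : 0 < ε) :
    ∃ c c' : ℝ, 0 < c ∧ 0 < c' ∧ ∃ n₀ : ℕ, ∀ n m N : ℕ, n₀ ≤ n → (1 + ε) * n ≤ m →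
      Real.log n ^ 6 < (N : ℝ) →
      cuckooPr2 n m N (fun ω =>
          c * N < ∑ i : Fin N, (cuckooC n m ω.1.1 ω.1.2 (ω.2 i) : ℝ))
        ≤ (n : ℝ) ^ (-(c' * Real.log n)) := by
  have hlog : 0 < Real.log (1 + ε) := Real.log_pos (by linarith)
  obtain ⟨δ, hδ⟩ : ∃ δ, δ = Real.log (1 + ε) / 4 := ⟨_, rfl⟩
  have hδ0 : 0 < δ := by rw [hδ]; positivity
  have hZ4 : Real.exp δ ^ 4 = 1 + ε := by
    rw [← Real.exp_nat_mul, hδ]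
    push_cast
    rw [mul_div_cancel₀ _ (by norm_num), Real.exp_log (by linarith)]
  have hZ1 : 1 < Real.exp δ := Real.one_lt_exp_iff.2 hδ0
  obtain ⟨Z, hZ⟩ : ∃ Z, Z = Real.exp δ := ⟨_, rfl⟩
  rw [← hZ] at hZ4 hZ1
  obtain ⟨ρ, hρ⟩ : ∃ ρ, ρ = Z ^ 2 / (1 + ε) := ⟨_, rfl⟩
  have hρ1 : ρ < 1 := by
    rw [hρ, div_lt_one (by linarith), ← hZ4]
    exact pow_lt_pow_right₀ hZ1 (by norm_num)
  have hχ : 0 < 1 / (1 - ρ) := by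
    have : 0 < 1 - ρ := by linarith
    positivity
  have t1 : Filter.Tendsto (fun n : ℕ => Real.log n) Filter.atTop Filter.atTop :=
    Real.tendsto_log_atTop.comp tendsto_natCast_atTop_atTop
  have t2 : ∀ᶠ n : ℕ in Filter.atTop, Real.log n ^ 6 ≤ n := by
    have h := (Real.isLittleO_pow_log_id_atTop (n := 6)).bound (show (0 : ℝ) < 1 by norm_num)
    filter_upwards [tendsto_natCast_atTop_atTop.eventually h] with n hn
    simp only [id, Real.norm_eq_abs, one_mul, Nat.abs_cast] at hn
    exact (le_abs_self _).trans hn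
  obtain ⟨n₀, hn₀⟩ := Filter.eventually_atTop.1
    ((t1.eventually_ge_atTop (max 2 (2 / δ))).and (t2.and (Filter.eventually_ge_atTop 1)))
  refine ⟨Real.exp 1 * (Z * (2 * (1 / (1 - ρ)) + (1 / (1 - ρ)) ^ 2)), 1 / 2, by positivity,
    by norm_num, n₀, ?_⟩
  intro n m N hn hm hN
  obtain ⟨hL, hLn, hn1⟩ := hn₀ n hn
  have hnR : (1 : ℝ) ≤ n := by exact_mod_cast hn1
  obtain ⟨L, hLdef⟩ : ∃ L, L = Real.log n := ⟨_, rfl⟩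
  rw [← hLdef] at hL hLn hN
  have hL2 : 2 ≤ L := (le_max_left _ _).trans hL
  have hLδ : 2 / δ ≤ L := (le_max_right _ _).trans hL
  have hnm : (n : ℝ) ≤ m := by nlinarith
  have hmR : (0 : ℝ) < m := by linarith
  have hm0 : 0 < m := by exact_mod_cast hmR
  have hN0 : 0 < N := by
    have : (0 : ℝ) < N := lt_of_le_of_lt (by positivity) hN
    exact_mod_cast this
  obtain ⟨J, hJ⟩ : ∃ J, J = ⌊L ^ 2⌋₊ := ⟨_, rfl⟩
  have hJ1 : (J : ℝ) ≤ L ^ 2 := by rw [hJ]; exact Nat.floor_le (by positivity)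
  have hJ2 : L ^ 2 < J + 1 := by rw [hJ]; exact Nat.lt_floor_add_one _
  have hJ3 : L ^ 2 / 2 ≤ J := by nlinarith
  have hJ0 : (0 : ℝ) < J := by nlinarith
  have hy2 : (2 * J / δ) ^ 2 ≤ L ^ 6 := by
    calc (2 * J / δ) ^ 2 = (2 / δ) ^ 2 * (J : ℝ) ^ 2 := by ring
      _ ≤ L ^ 2 * (L ^ 2) ^ 2 := by gcongr
      _ = L ^ 6 := by ring
  have key := CuckooAux.pr_bound (n := n) (m := m) (N := N) (ρ := ρ) (y := 2 * J / δ) (Z := Z)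
    hm0 hN0 (by positivity) (hy2.trans hN.le) ((hy2.trans hLn).trans hnm) (by linarith)
    (by
      rw [hρ, div_mul_eq_mul_div, div_le_div_iff₀ hmR (by linarith)]
      have : 0 ≤ Z ^ 2 := by positivity
      nlinarith) hρ1 J (by
      rw [hZ]
      apply le_of_eq
      congr 1
      field_simp)
  refine key.trans ?_
  rw [Real.rpow_def_of_pos (by linarith), ← hLdef]
  apply Real.exp_le_exp.2
  nlinarith
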